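/- Let d ≥ 1, let α ∈ ℕ^d be a multi-index, and let Φ : [0,∞) → ℝ be a smooth bounded function with bounded derivative satisfying Φ'(t) ≥ 0 for all t ≥ 0. Then Φ(0) V_α(0) + (1/2) ∫_0^∞ Φ'(t/2) V_α(t) dt ≥ 2^d ∫_0^∞ Φ(t) e^{−t} dt. -/

import Mathlib

open MeasureTheory

noncomputable section

/-- The `n`-th Laguerre polynomial `L_n(x) = Σ_{k=0}^n (n choose k) (−x)^k / k!`. -/
def laguerreFun (n : ℕ) (x : ℝ) : ℝ :=
  ∑ k ∈ Finset.range (n + 1), (n.choose k : ℝ) * (-x) ^ k / (k.factorial : ℝ)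

/-- `T_n(X) = Σ_{k=0}^{n−1} (−1)^k L_k(X) + ((−1)^n/2) L_n(X)`. -/
def Tfun (n : ℕ) (X : ℝ) : ℝ :=
  (∑ k ∈ Finset.range n, (-1 : ℝ) ^ k * laguerreFun k X) +
    (-1 : ℝ) ^ n / 2 * laguerreFun n X

/-- `V_α(X) = 4 e^{−X/2} Σ_{k=0}^{d−1} C(d−1,k) T_{|α|+k}(X)`. -/
def Vfun (d : ℕ) (α : Fin d → ℕ) (X : ℝ) : ℝ :=
  4 * Real.exp (-X / 2) *
    ∑ k ∈ Finset.range d, ((d - 1).choose k : ℝ) * Tfun ((∑ j, α j) + k) X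

/-! ### Laguerre polynomials -/

lemma lag_succ_sub (n : ℕ) (x : ℝ) :
    laguerreFun (n + 1) x - laguerreFun n x =
      ∑ k ∈ Finset.range (n + 1), (n.choose k : ℝ) * (-x) ^ (k + 1) / ((k + 1).factorial : ℝ) := by
  have h : laguerreFun n x =
      ∑ k ∈ Finset.range (n + 1 + 1), (n.choose k : ℝ) * (-x) ^ k / (k.factorial : ℝ) := by
    rw [Finset.sum_range_succ]
    simp [laguerreFun]
  rw [h, laguerreFun, ← Finset.sum_sub_distrib, Finset.sum_range_succ']
  simp only [Nat.choose_zero_right, sub_self, add_zero]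
  refine Finset.sum_congr rfl fun k _ => ?_
  rw [Nat.choose_succ_succ]
  push_cast
  ring

lemma lag_extend (n N : ℕ) (h : n < N) (x : ℝ) :
    laguerreFun n x = ∑ k ∈ Finset.range N, (n.choose k : ℝ) * (-x) ^ k / (k.factorial : ℝ) := by
  unfold laguerreFun
  refine Finset.sum_subset (fun k hk => ?_) (fun k _ hk => ?_)
  · simp at hk ⊢; omega
  · simp at hk
    rw [Nat.choose_eq_zero_of_lt (by omega)]; simp

lemma lag_rec (m : ℕ) (x : ℝ) :
    ((m : ℝ) + 2) * laguerreFun (m + 2) x =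
      (2 * m + 3 - x) * laguerreFun (m + 1) x - (m + 1) * laguerreFun m x := by
  have h1 : (-x) * laguerreFun (m + 1) x = ∑ k ∈ Finset.range (m + 2),
      ((m + 1).choose k : ℝ) * (-x) ^ (k + 1) / (k.factorial : ℝ) := by
    rw [laguerreFun, Finset.mul_sum]
    refine Finset.sum_congr rfl fun k _ => ?_
    ring
  have h2 : ((m : ℝ) + 2) * laguerreFun (m + 2) x - (2 * m + 3) * laguerreFun (m + 1) x
      + (m + 1) * laguerreFun m x = (-x) * laguerreFun (m + 1) x := by
    rw [h1, lag_extend (m + 2) (m + 2 + 1) (by omega), lag_extend (m + 1) (m + 2 + 1) (by omega),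
      lag_extend m (m + 2 + 1) (by omega), Finset.mul_sum, Finset.mul_sum, Finset.mul_sum,
      ← Finset.sum_sub_distrib, ← Finset.sum_add_distrib, Finset.sum_range_succ']
    simp only [Nat.choose_zero_right, pow_zero, Nat.factorial_zero]
    have h0 : ((m : ℝ) + 2) * (((1 : ℕ) : ℝ) * 1 / ((1 : ℕ) : ℝ))
      - (2 * m + 3) * (((1 : ℕ) : ℝ) * 1 / ((1 : ℕ) : ℝ))
      + (m + 1) * (((1 : ℕ) : ℝ) * 1 / ((1 : ℕ) : ℝ)) = 0 := by
      push_cast; ring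
    rw [h0, add_zero]
    refine Finset.sum_congr rfl fun k hk => ?_
    have hk' : k ≤ m + 1 := by simp at hk; omega
    have e1 : ((m + 2).choose (k + 1) : ℝ) = (m + 1).choose k + (m + 1).choose (k + 1) := by
      rw [show m + 2 = (m + 1) + 1 from rfl, Nat.choose_succ_succ]; push_cast; ring
    have e2 : ((m + 1).choose (k + 1) : ℝ) = m.choose k + m.choose (k + 1) := by
      rw [Nat.choose_succ_succ]; push_cast; ring
    have e3 : (m.choose k : ℝ) * (m + 1) = (m + 1).choose k * (m + 1 - k) := by
      have := Nat.choose_mul_succ_eq m k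
      have h3 : ((m.choose k * (m + 1) : ℕ) : ℝ) = (((m + 1).choose k * (m + 1 - k) : ℕ) : ℝ) := by
        rw [this]
      rw [Nat.cast_mul, Nat.cast_mul, Nat.cast_sub hk'] at h3
      push_cast at h3
      exact h3
    have hf : (k.factorial : ℝ) ≠ 0 := by positivity
    have hk1 : (k : ℝ) + 1 ≠ 0 := by positivity
    rw [Nat.factorial_succ]
    push_cast
    field_simp
    rw [e1, e2]
    linear_combination (-(-x) ^ (k + 1)) * e3
  linear_combination h2

lemma lag_hasDeriv_sub (n : ℕ) (x : ℝ) :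
    HasDerivAt (fun x => laguerreFun (n + 1) x - laguerreFun n x) (-laguerreFun n x) x := by
  have : (fun x => laguerreFun (n + 1) x - laguerreFun n x) = fun x =>
      ∑ k ∈ Finset.range (n + 1), (n.choose k : ℝ) * (-x) ^ (k + 1) / ((k + 1).factorial : ℝ) := by
    funext x; exact lag_succ_sub n x
  rw [this, laguerreFun, ← Finset.sum_neg_distrib]
  refine HasDerivAt.fun_sum fun k _ => ?_
  have h := ((((hasDerivAt_id x).neg).pow (k + 1)).const_mul (n.choose k : ℝ)).div_const
    ((k + 1).factorial : ℝ)
  refine h.congr_deriv ?_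
  have hf : (k.factorial : ℝ) ≠ 0 := by positivity
  have hk1 : (k : ℝ) + 1 ≠ 0 := by positivity
  rw [Nat.factorial_succ]
  push_cast
  simp
  field_simp

/-- the alternating sums -/
def altS (n : ℕ) (x : ℝ) : ℝ := ∑ k ∈ Finset.range n, (-1 : ℝ) ^ k * laguerreFun k x

lemma Tfun_hasDeriv (n : ℕ) (x : ℝ) : HasDerivAt (Tfun n) (1 / 2 * altS n x) x := by
  induction n with
  | zero =>
    have : Tfun 0 = fun _ => (1 / 2 : ℝ) := by
      funext y; simp [Tfun, laguerreFun]
    rw [this]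
    simpa [altS] using hasDerivAt_const x (1 / 2 : ℝ)
  | succ n ih =>
    have h : Tfun (n + 1) = fun y => Tfun n y +
        (-((-1) ^ n / 2)) * (laguerreFun (n + 1) y - laguerreFun n y) := by
      funext y
      simp only [Tfun, Finset.sum_range_succ]
      ring
    rw [h]
    refine (ih.add ((lag_hasDeriv_sub n x).const_mul _)).congr_deriv ?_
    simp only [altS, Finset.sum_range_succ]
    ring

lemma Tfun_zero (n : ℕ) : Tfun n 0 = 1 / 2 := by
  have hl : ∀ k, laguerreFun k 0 = 1 := by
    intro k
    rw [laguerreFun, Finset.sum_range_succ']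
    simp
  induction n with
  | zero => simp [Tfun, hl]
  | succ n ih =>
    simp only [Tfun, Finset.sum_range_succ, hl] at ih ⊢
    rw [pow_succ]; linarith

/-! ### Hermite squares and the Feldheim positivity -/

/-- probabilist Hermite polynomials -/
def heFun (z : ℝ) : ℕ → ℝ
  | 0 => 1
  | 1 => z
  | n + 2 => z * heFun z (n + 1) - (n + 1) * heFun z n

/-- coefficients of `(1 - t^2)^(-1/2)` -/
def bFun : ℕ → ℝ
  | 0 => 1
  | 1 => 0
  | n + 2 => (n + 1) / (n + 2) * bFun n

lemma bFun_nonneg : ∀ n, 0 ≤ bFun n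
  | 0 => by simp [bFun]
  | 1 => by simp [bFun]
  | n + 2 => by
    rw [bFun]
    have := bFun_nonneg n
    positivity

open PowerSeries in
lemma ps_unique (P Q F G : PowerSeries ℝ) (hP : P ≠ 0)
    (hF : P * d⁄dX ℝ F = Q * F) (hG : P * d⁄dX ℝ G = Q * G)
    (hF0 : constantCoeff F = 1) (hG0 : constantCoeff G = 1) : F = G := by
  have h1 : d⁄dX ℝ F * G = F * d⁄dX ℝ G := by
    apply mul_left_cancel₀ hP
    linear_combination G * hF - F * hG
  have hGi : G * G⁻¹ = 1 := PowerSeries.mul_inv_cancel _ (by rw [hG0]; exact one_ne_zero)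
  have h2 : F * G⁻¹ = 1 := by
    apply PowerSeries.derivative.ext
    · rw [Derivation.leibniz, PowerSeries.derivative_inv']
      simp only [smul_eq_mul, Derivation.map_one_eq_zero]
      linear_combination (G⁻¹) ^ 2 * h1 - (G⁻¹ * d⁄dX ℝ F) * hGi
    · simp [hF0, hG0]
  calc F = F * G⁻¹ * G := by rw [mul_assoc, mul_comm G⁻¹, hGi, mul_one]
    _ = G := by rw [h2, one_mul]

open PowerSeries in
lemma ps_M (z c : ℝ) (hcz : c = 1 - z ^ 2) (M : PowerSeries ℝ) (hM : M = PowerSeries.mk fun n => heFun z n ^ 2 / n.factorial) :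
    d⁄dX ℝ M + X * (d⁄dX ℝ M - X * (d⁄dX ℝ M + X * d⁄dX ℝ M)) =
      C (z ^ 2) * M + X * (C c * M + X * M) := by
  ext n
  match n with
  | 0 =>
    simp only [map_add, map_sub, coeff_zero_X_mul, coeff_C_mul, coeff_derivative, hM, coeff_mk]
    simp [heFun]
  | 1 =>
    simp only [map_add, map_sub, coeff_succ_X_mul, coeff_zero_X_mul, coeff_C_mul, coeff_derivative, hM, coeff_mk]
    simp [heFun, hcz]
    ring
  | n + 2 =>
    have hn : (n.factorial : ℝ) ≠ 0 := by positivity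
    have h1 : (n : ℝ) + 1 ≠ 0 := by positivity
    have h2 : (n : ℝ) + 2 ≠ 0 := by positivity
    have h3 : (n : ℝ) + 3 ≠ 0 := by positivity
    have hc : coeff (n + 2) (X * (d⁄dX ℝ M - X * (d⁄dX ℝ M + X * d⁄dX ℝ M))) =
      coeff (n + 2) M * (n + 2) - (coeff (n + 1) M * (n + 1) + coeff n M * n) := by
      rw [show n + 2 = (n + 1) + 1 from rfl, coeff_succ_X_mul, map_sub, coeff_succ_X_mul, map_add,
        coeff_derivative, coeff_derivative]
      have : coeff n (X * d⁄dX ℝ M) = coeff n M * n := by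
        cases n with
        | zero => simp
        | succ n => rw [coeff_succ_X_mul, coeff_derivative]; push_cast; ring
      rw [this]; push_cast; ring
    rw [map_add, hc]
    simp only [map_add, map_sub, coeff_succ_X_mul, coeff_C_mul, coeff_derivative, hM, coeff_mk]
    rw [hcz]
    rw [show n + 2 + 1 = (n + 1) + 2 from rfl, heFun, heFun]
    simp only [Nat.factorial_succ]
    push_cast
    have e1 : (n : ℝ) + 1 + 1 ≠ 0 := by positivity
    have e2 : (n : ℝ) + 1 + 1 + 1 ≠ 0 := by positivity
    field_simp
    ring

open PowerSeries in
lemma ps_B (B : PowerSeries ℝ) (hB : B = PowerSeries.mk bFun) :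
    d⁄dX ℝ B - X * (X * d⁄dX ℝ B) = X * B := by
  ext n
  match n with
  | 0 =>
    simp only [map_sub, coeff_zero_X_mul, coeff_derivative, hB, coeff_mk]
    simp [bFun]
  | 1 =>
    simp only [map_sub, coeff_succ_X_mul, coeff_zero_X_mul, coeff_derivative, hB, coeff_mk]
    norm_num [bFun]
  | n + 2 =>
    simp only [map_sub, coeff_succ_X_mul, coeff_derivative, hB, coeff_mk]
    rw [show n + 2 + 1 = (n + 1) + 2 from rfl, bFun]
    have e2 : ((n + 1 : ℕ) : ℝ) + 2 ≠ 0 := by positivity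
    have e3 : (n : ℝ) + 1 + 2 ≠ 0 := by positivity
    push_cast
    field_simp
    ring

open PowerSeries in
lemma ps_A (x c : ℝ) (hcx : c = x - 1) (A : PowerSeries ℝ)
    (hA : A = PowerSeries.mk fun n => (-1) ^ n * laguerreFun n x) :
    d⁄dX ℝ A + X * (C 2 * d⁄dX ℝ A + X * d⁄dX ℝ A) = C c * A - X * A := by
  ext n
  match n with
  | 0 =>
    simp only [map_add, map_sub, coeff_zero_X_mul, coeff_C_mul, coeff_derivative, hA, coeff_mk]
    simp [laguerreFun, Finset.sum_range_succ, hcx]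
    ring
  | 1 =>
    have := lag_rec 0 x
    simp only [map_add, map_sub, coeff_succ_X_mul, coeff_zero_X_mul, coeff_C_mul, coeff_derivative, hA, coeff_mk]
    norm_num [hcx] at this ⊢
    linear_combination this
  | n + 2 =>
    have := lag_rec (n + 1) x
    simp only [map_add, map_sub, coeff_succ_X_mul, coeff_C_mul, coeff_derivative, hA, coeff_mk]
    rw [show n + 2 + 1 = n + 1 + 2 from rfl]
    rw [show n + 1 + 1 = n + 2 from rfl] at *
    push_cast at this ⊢
    simp only [pow_succ]
    rw [hcx]
    linear_combination (-(-1) ^ n) * this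

open PowerSeries in
lemma altS_nonneg (n : ℕ) (x : ℝ) (hx : 0 ≤ x) : 0 ≤ altS n x := by
  obtain ⟨z, hz⟩ : ∃ z : ℝ, z ^ 2 = x := ⟨√x, Real.sq_sqrt hx⟩
  obtain ⟨M, hM⟩ : ∃ M, M = PowerSeries.mk fun n => heFun z n ^ 2 / n.factorial := ⟨_, rfl⟩
  obtain ⟨B, hB⟩ : ∃ B, B = PowerSeries.mk bFun := ⟨_, rfl⟩
  obtain ⟨A, hA⟩ : ∃ A, A = PowerSeries.mk fun n => (-1) ^ n * laguerreFun n x := ⟨_, rfl⟩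
  have h1 := ps_M z (1 - x) (by rw [hz]) M hM
  have h2 := ps_B B hB
  have h3 := ps_A x (x - 1) rfl A hA
  rw [hz] at h1
  -- `M * B * (1 - X) = A`
  have key : M * B * (1 - X) = A := by
    have hdX : d⁄dX ℝ (1 - X : PowerSeries ℝ) = -1 := by
      rw [map_sub, PowerSeries.derivative_X, Derivation.map_one_eq_zero]; ring
    have hC : (C (1 - x) : PowerSeries ℝ) = 1 - C x := by simp
    have hC' : (C (x - 1) : PowerSeries ℝ) = C x - 1 := by simp
    have hC2 : (C 2 : PowerSeries ℝ) = 2 := map_ofNat C 2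
    rw [hC] at h1
    rw [hC', hC2] at h3
    refine ps_unique ((1 - X) * (1 + X) ^ 2) ((1 - X) * (C x - 1 - X)) _ _ ?_ ?_ ?_ ?_ ?_
    · intro h
      have := congrArg constantCoeff h
      simp at this
    · rw [Derivation.leibniz, Derivation.leibniz, hdX]
      simp only [smul_eq_mul]
      linear_combination (1 - X) * B * h1 + (1 - X) * M * (1 + X) * h2
    · linear_combination (1 - X) * h3
    · simp [hM, hB, heFun, bFun]
    · simp [hA, laguerreFun]
  have hS : (1 - X) * (PowerSeries.mk fun n => altS (n + 1) x) = A := by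
    ext n
    rw [sub_mul, one_mul, map_sub, hA, coeff_mk, coeff_mk]
    cases n with
    | zero => simp [altS]
    | succ n =>
      rw [coeff_succ_X_mul, coeff_mk]
      simp only [altS, Finset.sum_range_succ]
      ring
  have hMS : M * B = PowerSeries.mk fun n => altS (n + 1) x := by
    have h0 : (1 - X : PowerSeries ℝ) ≠ 0 := by
      intro h
      have := congrArg constantCoeff h
      simp at this
    apply mul_left_cancel₀ h0
    rw [hS, ← key]; ring
  cases n with
  | zero => simp [altS]
  | succ n =>
    have := congrArg (coeff n) hMS
    rw [coeff_mk, coeff_mul] at this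
    rw [← this]
    refine Finset.sum_nonneg fun p _ => ?_
    rw [hM, hB, coeff_mk, coeff_mk]
    have := bFun_nonneg p.2
    positivity

lemma Tfun_ge (n : ℕ) (x : ℝ) (hx : 0 ≤ x) : 1 / 2 ≤ Tfun n x := by
  have hmono : MonotoneOn (Tfun n) (Set.Ici 0) := by
    apply monotoneOn_of_deriv_nonneg (convex_Ici 0)
    · exact fun y _ => (Tfun_hasDeriv n y).continuousAt.continuousWithinAt
    · exact fun y _ => (Tfun_hasDeriv n y).differentiableAt.differentiableWithinAt
    · intro y hy
      rw [interior_Ici] at hy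
      rw [(Tfun_hasDeriv n y).deriv]
      have := altS_nonneg n y (le_of_lt hy)
      positivity
  rw [← Tfun_zero n]
  exact hmono (by simp) hx hx

lemma choose_sum (d : ℕ) (hd : 1 ≤ d) :
    ∑ k ∈ Finset.range d, ((d - 1).choose k : ℝ) * (1 / 2) = 2 ^ d / 4 := by
  obtain ⟨e, rfl⟩ : ∃ e, d = e + 1 := ⟨d - 1, by omega⟩
  rw [← Finset.sum_mul, Nat.add_sub_cancel]
  have := Nat.sum_range_choose e
  have h : ∑ k ∈ Finset.range (e + 1), (e.choose k : ℝ) = 2 ^ e := by exact_mod_cast this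
  rw [h, pow_succ]; ring

lemma Vfun_zero (d : ℕ) (hd : 1 ≤ d) (α : Fin d → ℕ) : Vfun d α 0 = 2 ^ d := by
  simp only [Vfun, Tfun_zero]
  rw [choose_sum d hd]
  simp
  ring

lemma Vfun_ge (d : ℕ) (hd : 1 ≤ d) (α : Fin d → ℕ) (x : ℝ) (hx : 0 ≤ x) :
    2 ^ d * Real.exp (-x / 2) ≤ Vfun d α x := by
  have h : ∑ k ∈ Finset.range d, ((d - 1).choose k : ℝ) * (1 / 2) ≤
      ∑ k ∈ Finset.range d, ((d - 1).choose k : ℝ) * Tfun ((∑ j, α j) + k) x :=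
    Finset.sum_le_sum fun k _ => mul_le_mul_of_nonneg_left (Tfun_ge _ x hx) (by positivity)
  rw [choose_sum d hd] at h
  have := mul_le_mul_of_nonneg_left h (Real.exp_nonneg (-x / 2))
  unfold Vfun
  linarith

/-! ### Integrability -/

lemma int_pow (k : ℕ) :
    IntegrableOn (fun t : ℝ => t ^ k * Real.exp (-t / 2)) (Set.Ioi 0) := by
  have := integrableOn_rpow_mul_exp_neg_mul_rpow (s := (k : ℝ)) (p := 1) (b := 1 / 2)
    (by have : (0 : ℝ) ≤ k := by positivity
        linarith) one_pos (by norm_num)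
  refine this.congr_fun (fun t _ => ?_) measurableSet_Ioi
  simp only [Real.rpow_natCast, Real.rpow_one]
  congr 2
  ring

lemma int_lag (n : ℕ) :
    IntegrableOn (fun t : ℝ => laguerreFun n t * Real.exp (-t / 2)) (Set.Ioi 0) := by
  have : (fun t : ℝ => laguerreFun n t * Real.exp (-t / 2)) = fun t =>
      ∑ k ∈ Finset.range (n + 1), ((n.choose k : ℝ) * (-1) ^ k / k.factorial) *
        (t ^ k * Real.exp (-t / 2)) := by
    funext t
    rw [laguerreFun, Finset.sum_mul]
    refine Finset.sum_congr rfl fun k _ => ?_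
    rw [neg_pow]; ring
  rw [this]
  exact integrable_finsetSum _ fun k _ => (int_pow k).const_mul _

lemma int_T (n : ℕ) :
    IntegrableOn (fun t : ℝ => Tfun n t * Real.exp (-t / 2)) (Set.Ioi 0) := by
  have : (fun t : ℝ => Tfun n t * Real.exp (-t / 2)) = fun t =>
      (∑ k ∈ Finset.range n, (-1) ^ k * (laguerreFun k t * Real.exp (-t / 2))) +
        (-1) ^ n / 2 * (laguerreFun n t * Real.exp (-t / 2)) := by
    funext t
    rw [Tfun, add_mul, Finset.sum_mul]
    simp only [mul_assoc]
  rw [this]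
  exact (integrable_finsetSum _ fun k _ => (int_lag k).const_mul _).add ((int_lag n).const_mul _)

lemma int_V (d : ℕ) (α : Fin d → ℕ) : IntegrableOn (Vfun d α) (Set.Ioi 0) := by
  have : Vfun d α = fun t =>
      ∑ k ∈ Finset.range d, (4 * ((d - 1).choose k : ℝ)) *
        (Tfun ((∑ j, α j) + k) t * Real.exp (-t / 2)) := by
    funext t
    rw [Vfun, Finset.mul_sum]
    refine Finset.sum_congr rfl fun k _ => ?_
    ring
  rw [this]
  exact integrable_finsetSum _ fun k _ => (int_T _).const_mul _

lemma int_bdd (f g : ℝ → ℝ) (C : ℝ) (hf : Continuous f) (hC : ∀ t, 0 ≤ t → |f t| ≤ C)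
    (hg : IntegrableOn g (Set.Ioi 0)) : IntegrableOn (fun t => f t * g t) (Set.Ioi 0) := by
  refine Integrable.bdd_mul (c := C) hg hf.aestronglyMeasurable ?_
  filter_upwards [ae_restrict_mem measurableSet_Ioi] with t ht
  exact hC t (le_of_lt ht)

theorem key_inequality (d : ℕ) (hd : 1 ≤ d) (α : Fin d → ℕ) (Φ : ℝ → ℝ)
    (hΦ_smooth : ContDiff ℝ (⊤ : ℕ∞) Φ)
    (hΦ_bdd : ∃ C : ℝ, ∀ t : ℝ, 0 ≤ t → |Φ t| ≤ C)
    (hΦ'_bdd : ∃ C : ℝ, ∀ t : ℝ, 0 ≤ t → |deriv Φ t| ≤ C)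
    (hΦ'_nonneg : ∀ t : ℝ, 0 ≤ t → 0 ≤ deriv Φ t) :
    (2 : ℝ) ^ d * ∫ t in Set.Ioi (0 : ℝ), Φ t * Real.exp (-t) ≤
      Φ 0 * Vfun d α 0 + (1 / 2) * ∫ t in Set.Ioi (0 : ℝ), deriv Φ (t / 2) * Vfun d α t := by
  obtain ⟨C₀, hC₀⟩ := hΦ_bdd
  obtain ⟨C₁, hC₁⟩ := hΦ'_bdd
  have hdc : Continuous (deriv Φ) := hΦ_smooth.continuous_deriv (by simp)
  have hc : Continuous Φ := hΦ_smooth.continuous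
  have hdiff : Differentiable ℝ Φ := hΦ_smooth.differentiable (by simp)
  have hexp : IntegrableOn (fun t : ℝ => Real.exp (-t)) (Set.Ioi 0) := integrableOn_exp_neg_Ioi 0
  have hexp2 : IntegrableOn (fun t : ℝ => Real.exp (-t / 2)) (Set.Ioi 0) := by
    simpa using int_pow 0
  have hi0 := int_bdd Φ _ C₀ hc hC₀ hexp
  have hi1 := int_bdd (deriv Φ) _ C₁ hdc hC₁ hexp
  have hb : ∀ t : ℝ, 0 ≤ t → |deriv Φ (t / 2)| ≤ C₁ := fun t ht => hC₁ _ (by positivity)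
  have hdc2 : Continuous fun t : ℝ => deriv Φ (t / 2) := hdc.comp (by fun_prop)
  have hi2 := int_bdd (fun t => deriv Φ (t / 2)) _ C₁ hdc2 hb (int_V d α)
  have hi3 := int_bdd (fun t => deriv Φ (t / 2)) _ C₁ hdc2 hb (hexp2.const_mul (2 ^ d))
  -- integration by parts
  have hibp : ∫ t in Set.Ioi (0 : ℝ), Φ t * Real.exp (-t) =
      Φ 0 + ∫ t in Set.Ioi (0 : ℝ), deriv Φ t * Real.exp (-t) := by
    have htend : Filter.Tendsto (fun t => Φ t * Real.exp (-t)) Filter.atTop (nhds 0) := by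
      have h1 : Filter.Tendsto (fun t : ℝ => C₀ * Real.exp (-t)) Filter.atTop (nhds 0) := by
        simpa using (Real.tendsto_exp_neg_atTop_nhds_zero).const_mul C₀
      refine squeeze_zero_norm' ?_ h1
      filter_upwards [Filter.eventually_ge_atTop 0] with t ht
      rw [Real.norm_eq_abs, abs_mul, Real.abs_exp]
      exact mul_le_mul_of_nonneg_right (hC₀ t ht) (Real.exp_nonneg _)
    have h := integral_Ioi_of_hasDerivAt_of_tendsto (a := 0)
      (f := fun t => Φ t * Real.exp (-t))
      (f' := fun t => deriv Φ t * Real.exp (-t) - Φ t * Real.exp (-t)) (m := 0)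
      (hc.mul (by fun_prop)).continuousWithinAt
      (fun t _ => by
        have h1 := (hdiff t).hasDerivAt.mul ((hasDerivAt_id t).neg.exp)
        refine h1.congr_deriv ?_
        simp
        ring) (hi1.sub hi0) htend
    rw [integral_sub hi1 hi0] at h
    simp at h
    linarith
  have hcv : (1 / 2 : ℝ) * ∫ t in Set.Ioi (0 : ℝ), deriv Φ (t / 2) * (2 ^ d * Real.exp (-t / 2)) =
      2 ^ d * ∫ t in Set.Ioi (0 : ℝ), deriv Φ t * Real.exp (-t) := by
    have h := integral_comp_mul_left_Ioi (fun t => deriv Φ t * Real.exp (-t)) 0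
      (b := (1 / 2 : ℝ)) (by norm_num)
    have h2 : ∫ t in Set.Ioi (0 : ℝ), deriv Φ (t / 2) * (2 ^ d * Real.exp (-t / 2)) =
        2 ^ d * ∫ t in Set.Ioi (0 : ℝ), deriv Φ (1 / 2 * t) * Real.exp (-(1 / 2 * t)) := by
      rw [← integral_const_mul]
      congr 1
      funext t
      rw [show t / 2 = 1 / 2 * t by ring, show -t / 2 = -(1 / 2 * t) by ring]
      ring
    rw [h2, h]
    simp
    ring
  have hmono : ∫ t in Set.Ioi (0 : ℝ), deriv Φ (t / 2) * (2 ^ d * Real.exp (-t / 2)) ≤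
      ∫ t in Set.Ioi (0 : ℝ), deriv Φ (t / 2) * Vfun d α t := by
    refine setIntegral_mono_on hi3 hi2 measurableSet_Ioi fun t ht => ?_
    have ht' : (0 : ℝ) ≤ t := le_of_lt ht
    exact mul_le_mul_of_nonneg_left (Vfun_ge d hd α t ht') (hΦ'_nonneg _ (by positivity))
  rw [hibp, Vfun_zero d hd α]
  linarith
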